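/- Let p, q ∈ (0,∞], r ∈ (0,p], l ∈ ℕ, α₃ ≥ 0, α₁, α₂ ∈ ℝ, σ₁, σ₂ ∈ (0,∞], and let {t_k} ∈ X̃^{α₃}_{α,σ,p} (i.e. {t_k} ∈ X^{α₃}_{α,σ,p} and t_k = t̄_k for all k). Then B̄^l_{p,q,r}(ℝⁿ,{t_k}) ⊂ B̃^l_{p,q,r}(ℝⁿ,{t_k}), and there is a constant C > 0, independent of φ, with ‖φ | B̃^l_{p,q,r}(ℝⁿ,{t_k})‖ ≤ C·‖φ | B̄^l_{p,q,r}(ℝⁿ,{t_k})‖ for all φ ∈ L_r^{loc}(ℝⁿ). -/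

import Mathlib

open MeasureTheory ENNReal Filter
open scoped Classical

noncomputable section

/-- `ℓ_q` quasinorm of a family of extended nonnegative reals (supremum when `q = ∞`). -/
def lqNorm {ι : Type*} (q : ℝ≥0∞) (c : ι → ℝ≥0∞) : ℝ≥0∞ :=
  if q = ∞ then ⨆ i, c i else (∑' i, c i ^ q.toReal) ^ (1 / q.toReal)

/-- `L_p` quasinorm of an `ℝ≥0∞`-valued function (essential supremum when `p = ∞`). -/
def lpNormE {α : Type*} [MeasurableSpace α] (p : ℝ≥0∞) (μ : Measure α) (f : α → ℝ≥0∞) : ℝ≥0∞ :=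
  if p = ∞ then essSup f μ else (∫⁻ x, f x ^ p.toReal ∂μ) ^ (1 / p.toReal)

abbrev Rn (n : ℕ) := Fin n → ℝ

/-- Open cube centred at `x` of half-side `s` (i.e. `x + s·Iⁿ`). -/
def openCube {n : ℕ} (x : Rn n) (s : ℝ) : Set (Rn n) := {y | ∀ i, |y i - x i| < s}

/-- Open axis-parallel cube with lower corner `c` and side `s`. -/
def cubeAt {n : ℕ} (c : Rn n) (s : ℝ) : Set (Rn n) := {x | ∀ i, c i < x i ∧ x i < c i + s}

/-- Open dyadic cube `Q^n_{k,m}` of side `2^{-k}`. -/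
def dyadicCube (n k : ℕ) (m : Fin n → ℤ) : Set (Rn n) :=
  {x | ∀ i, (m i : ℝ) / 2 ^ k < x i ∧ x i < ((m i : ℝ) + 1) / 2 ^ k}

/-- Half-open dyadic cube `Q̃^n_{k,m}`. -/
def dyadicCubeHalf (n k : ℕ) (m : Fin n → ℤ) : Set (Rn n) :=
  {x | ∀ i, (m i : ℝ) / 2 ^ k ≤ x i ∧ x i < ((m i : ℝ) + 1) / 2 ^ k}

def dyadicCenter (n k : ℕ) (m : Fin n → ℤ) : Rn n := fun i => ((m i : ℝ) + 1 / 2) / 2 ^ k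

/-- The concentric dilate `c·Q^n_{k,m}` of a dyadic cube. -/
def dilatedCube (n k : ℕ) (m : Fin n → ℤ) (c : ℝ) : Set (Rn n) :=
  openCube (dyadicCenter n k m) (c / 2 ^ (k + 1))

def euclNorm {d : ℕ} (y : Rn d) : ℝ := Real.sqrt (∑ i, y i ^ 2)

/-- The difference `Δ^l(h)g(x)`. -/
def diffl {n : ℕ} (l : ℕ) (h : Rn n) (g : Rn n → ℝ) (x : Rn n) : ℝ :=
  ∑ j ∈ Finset.range (l + 1), ((l.choose j : ℝ) * (-1 : ℝ) ^ (l + j)) * g (x + (j : ℝ) • h)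

/-- The difference `Δ^l(h,Ω)g(x)`, vanishing unless the segment `[x, x + l·h]` lies in `Ω`. -/
def difflOn {n : ℕ} (l : ℕ) (Ω : Set (Rn n)) (h : Rn n) (g : Rn n → ℝ) (x : Rn n) : ℝ :=
  if ∀ τ ∈ Set.Icc (0 : ℝ) 1, x + (τ * l) • h ∈ Ω then diffl l h g x else 0

/-- `δ^l_r(Q)g`, where `s` is the side length of the cube `Q`. -/
def deltaE (n l : ℕ) (r : ℝ≥0∞) (s : ℝ) (Q : Set (Rn n)) (g : Rn n → ℝ) : ℝ≥0∞ :=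
  ENNReal.ofReal s ^ (-(2 * (n : ℝ)) / r.toReal) *
    eLpNorm (fun hx : Rn n × Rn n => diffl l hx.1 g hx.2) r
      ((volume.restrict (openCube (0 : Rn n) s)).prod (volume.restrict Q))

/-- `δ^l_r(Q,Ω)g`, where `s` is the side length of the cube `Q`. -/
def deltaEOn (n l : ℕ) (r : ℝ≥0∞) (s : ℝ) (Q Ω : Set (Rn n)) (g : Rn n → ℝ) : ℝ≥0∞ :=
  ENNReal.ofReal s ^ (-(2 * (n : ℝ)) / r.toReal) *
    eLpNorm (fun hx : Rn n × Rn n => difflOn l Ω hx.1 g hx.2) r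
      ((volume.restrict (openCube (0 : Rn n) s)).prod (volume.restrict Q))

/-- `Δ̄^l_r(s)g(x)`. -/
def barDelta (n l : ℕ) (r : ℝ≥0∞) (s : ℝ) (g : Rn n → ℝ) (x : Rn n) : ℝ≥0∞ :=
  ENNReal.ofReal s ^ (-(n : ℝ) / r.toReal) *
    eLpNorm (fun h : Rn n => diffl l h g x) r (volume.restrict (openCube (0 : Rn n) s))

/-- Membership in `L_r^{loc}(ℝⁿ)`. -/
def MemLrLoc (n : ℕ) (r : ℝ≥0∞) (φ : Rn n → ℝ) : Prop :=
  Measurable φ ∧ ∀ K : Set (Rn n), IsCompact K → eLpNorm φ r (volume.restrict K) < ∞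

def IsWeight {n : ℕ} (w : Rn n → ℝ) : Prop := Measurable w ∧ ∀ x, 0 < w x

/-- A `p`-admissible weight sequence. -/
def pAdmissible (n : ℕ) (p : ℝ≥0∞) (t : ℕ → Rn n → ℝ) : Prop :=
  ∀ k, IsWeight (t k) ∧ MemLrLoc n p (t k)

/-- The multiple sequence `t_{k,m} = ‖t_k‖_{L_p(Q^n_{k,m})}` associated with a weight sequence. -/
def tkm (n : ℕ) (p : ℝ≥0∞) (t : ℕ → Rn n → ℝ) (k : ℕ) (m : Fin n → ℤ) : ℝ≥0∞ :=
  eLpNorm (t k) p (volume.restrict (dyadicCube n k m))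

/-- The weight `t̄_k` built from a multiple sequence `T`. -/
def tbarOf (n : ℕ) (p : ℝ≥0∞) (T : ℕ → (Fin n → ℤ) → ℝ≥0∞) (k : ℕ) (x : Rn n) : ℝ≥0∞ :=
  (2 : ℝ≥0∞) ^ (((k * n : ℕ) : ℝ) / p.toReal) *
    ∑' m : Fin n → ℤ, (dyadicCubeHalf n k m).indicator (fun _ => T k m) x

/-- `(2^{kn} ∫_Q f^e)^{1/e}`, with the essential supremum modification for `e = ∞`. -/
def avgNorm (n k : ℕ) (e : ℝ≥0∞) (Q : Set (Rn n)) (f : Rn n → ℝ≥0∞) : ℝ≥0∞ :=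
  if e = ∞ then essSup f (volume.restrict Q)
  else ((2 : ℝ≥0∞) ^ (k * n) * ∫⁻ x in Q, f x ^ e.toReal) ^ (1 / e.toReal)

/-- Conditions (2.14)–(2.16) of the class `X^{α₃}_{α,σ,p}`, expressed for a multiple
sequence `T`. -/
def MemXseq (n : ℕ) (α₁ α₂ α₃ : ℝ) (σ₁ σ₂ p : ℝ≥0∞) (T : ℕ → (Fin n → ℤ) → ℝ≥0∞) : Prop :=
  (∃ C₁ : ℝ≥0∞, 0 < C₁ ∧ C₁ < ∞ ∧ ∀ k j : ℕ, k ≤ j → ∀ m : Fin n → ℤ,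
    avgNorm n k p (dyadicCube n k m) (tbarOf n p T k) *
      avgNorm n k σ₁ (dyadicCube n k m) (fun x => (tbarOf n p T j x)⁻¹) ≤
      C₁ * (2 : ℝ≥0∞) ^ (α₁ * ((k : ℝ) - (j : ℝ)))) ∧
  (∃ C₂ : ℝ≥0∞, 0 < C₂ ∧ C₂ < ∞ ∧ ∀ k j : ℕ, k ≤ j → ∀ m : Fin n → ℤ,
    (avgNorm n k p (dyadicCube n k m) (tbarOf n p T k))⁻¹ *
      avgNorm n k σ₂ (dyadicCube n k m) (tbarOf n p T j) ≤
      C₂ * (2 : ℝ≥0∞) ^ (α₂ * ((j : ℝ) - (k : ℝ)))) ∧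
  (∀ k : ℕ, ∀ m m' : Fin n → ℤ, (∀ i, |m i - m' i| ≤ 1) →
    0 < T k m ∧ T k m ≤ (2 : ℝ≥0∞) ^ (α₃ : ℝ) * T k m')

/-- The weighted class `X^{α₃}_{α,σ,p}` of weight sequences. -/
def MemX (n : ℕ) (α₁ α₂ α₃ : ℝ) (σ₁ σ₂ p : ℝ≥0∞) (t : ℕ → Rn n → ℝ) : Prop :=
  pAdmissible n p t ∧ MemXseq n α₁ α₂ α₃ σ₁ σ₂ p (tkm n p t)

/-- Quasinorm of `B̃^l_{p,q,r}(ℝⁿ, T)` with an `ℝ≥0∞`-valued weight sequence `T`. -/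
def tildeBnormE (n l : ℕ) (p q r : ℝ≥0∞) (T : ℕ → Rn n → ℝ≥0∞) (φ : Rn n → ℝ) : ℝ≥0∞ :=
  lqNorm q (fun k : ℕ =>
    lpNormE p volume (fun x =>
      T (k + 1) x *
        deltaE n l r ((2 : ℝ) ^ (1 - ((k : ℤ) + 1))) (openCube x ((2 : ℝ) ^ (-((k : ℤ) + 1)))) φ)) +
  lpNormE p volume (fun x => T 0 x * eLpNorm φ r (volume.restrict (openCube x 1)))

/-- Quasinorm of `B̃^l_{p,q,r}(ℝⁿ, {t_k})`. -/
def tildeBnorm (n l : ℕ) (p q r : ℝ≥0∞) (t : ℕ → Rn n → ℝ) (φ : Rn n → ℝ) : ℝ≥0∞ :=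
  tildeBnormE n l p q r (fun k x => ENNReal.ofReal (t k x)) φ

/-- Membership in `B̃^l_{p,q,r}(ℝⁿ, {t_k})`. -/
def MemTildeB (n l : ℕ) (p q r : ℝ≥0∞) (t : ℕ → Rn n → ℝ) (φ : Rn n → ℝ) : Prop :=
  MemLrLoc n r φ ∧ tildeBnorm n l p q r t φ < ∞

/-- Quasinorm of `B̄^l_{p,q,r}(ℝⁿ, {t_k})`. -/
def barBnorm (n l : ℕ) (p q r : ℝ≥0∞) (t : ℕ → Rn n → ℝ) (φ : Rn n → ℝ) : ℝ≥0∞ :=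
  lqNorm q (fun k : ℕ =>
    lpNormE p volume (fun x =>
      ENNReal.ofReal (t (k + 1) x) * barDelta n l r ((2 : ℝ) ^ (-((k : ℤ) + 1))) φ x)) +
  lpNormE p volume (fun x => ENNReal.ofReal (t 0 x) * eLpNorm φ r (volume.restrict (openCube x 1)))

/-- Membership in `B̄^l_{p,q,r}(ℝⁿ, {t_k})`. -/
def MemBarB (n l : ℕ) (p q r : ℝ≥0∞) (t : ℕ → Rn n → ℝ) (φ : Rn n → ℝ) : Prop :=
  MemLrLoc n r φ ∧ barBnorm n l p q r t φ < ∞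

/-- The class `A^{loc}_∞`. -/
def MemAlocInfty (n : ℕ) (w : Rn n → ℝ) : Prop :=
  ∃ α : ℝ, α ∈ Set.Ioo (0 : ℝ) 1 ∧ ∃ M : ℝ≥0∞, M < ∞ ∧
    ∀ (c : Rn n) (s : ℝ), 0 < s → s ≤ 1 →
      ∀ F : Set (Rn n), F ⊆ cubeAt c s → MeasurableSet F →
        ENNReal.ofReal α * volume (cubeAt c s) ≤ volume F →
        (∫⁻ x in cubeAt c s, ENNReal.ofReal (w x)) ≤ M * ∫⁻ x in F, ENNReal.ofReal (w x)

/-- The class `A^{loc}_1`. -/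
def MemAloc1 (n : ℕ) (w : Rn n → ℝ) : Prop :=
  ∃ C : ℝ≥0∞, C < ∞ ∧ ∀ (c : Rn n) (s : ℝ), 0 < s → s ≤ 1 →
    ∀ᵐ x ∂volume.restrict (cubeAt c s),
      (∫⁻ y in cubeAt c s, ENNReal.ofReal (w y)) ≤ C * volume (cubeAt c s) * ENNReal.ofReal (w x)

/-- The class `A^{loc}_{p₀}` for `p₀ > 1`. -/
def MemAlocGt (n : ℕ) (p₀ : ℝ) (w : Rn n → ℝ) : Prop :=
  ∃ C : ℝ≥0∞, C < ∞ ∧ ∀ (c : Rn n) (s : ℝ), 0 < s → s ≤ 1 →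
    ((volume (cubeAt c s))⁻¹ * ∫⁻ y in cubeAt c s, ENNReal.ofReal (w y)) *
      ((volume (cubeAt c s))⁻¹ *
        ∫⁻ y in cubeAt c s, ENNReal.ofReal (w y) ^ (-(1 : ℝ) / (p₀ - 1))) ^ (p₀ - 1) ≤ C

/-- The class `A^{loc}_{p₀}` for `p₀ ∈ [1,∞)`. -/
def MemAlocP (n : ℕ) (p₀ : ℝ) (w : Rn n → ℝ) : Prop :=
  if p₀ = 1 then MemAloc1 n w else MemAlocGt n p₀ w

/-- The class `{}^{loc}Y^{α₃}_{α₁,α₂}` of weight sequences of variable smoothness. -/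
def MemLocY (n : ℕ) (α₁ α₂ α₃ : ℝ) (s : ℕ → Rn n → ℝ) : Prop :=
  (∀ k, IsWeight (s k)) ∧
  (∃ C : ℝ, 0 < C ∧ ∀ j k : ℕ, j ≤ k → ∀ x : Rn n,
    C⁻¹ * (2 : ℝ) ^ (α₁ * ((k : ℝ) - (j : ℝ))) ≤ s k x / s j x ∧
      s k x / s j x ≤ C * (2 : ℝ) ^ (α₂ * ((k : ℝ) - (j : ℝ)))) ∧
  (∀ k : ℕ, ∀ x y : Rn n, euclNorm (x - y) ≤ (2 : ℝ) ^ (-(k : ℤ)) →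
    s k x ≤ (2 : ℝ) ^ α₃ * s k y)

/-- The set `Ξ^{d,n}_{k,m} = Q^n_{k,m} × (2^{-k}B^d ∖ 2^{-k-1}B^d) ⊂ ℝ^{n+d}`. -/
def Xi (n d k : ℕ) (m : Fin n → ℤ) : Set (Rn (n + d)) :=
  {z | (fun i => z (Fin.castAdd d i)) ∈ dyadicCube n k m ∧
       euclNorm (fun i : Fin d => z (Fin.natAdd n i)) < (2 : ℝ) ^ (-(k : ℤ)) ∧
       (2 : ℝ) ^ (-(k : ℤ) - 1) ≤ euclNorm (fun i : Fin d => z (Fin.natAdd n i))}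

/-- The multiple sequence `γ̂_{k,m} = ‖γ‖_{L_p(Ξ^{d,n}_{k,m})}` generated by a weight `γ`. -/
def gammaHat (n d : ℕ) (p : ℝ≥0∞) (γ : Rn (n + d) → ℝ) (k : ℕ) (m : Fin n → ℤ) : ℝ≥0∞ :=
  eLpNorm γ p (volume.restrict (Xi n d k m))

def delta1Good (n d : ℕ) (p : ℝ≥0∞) (γ : Rn (n + d) → ℝ) (δ : ℝ) : Prop :=
  ∃ C : ℝ≥0∞, C < ∞ ∧ ∀ k j : ℕ, k ≤ j → ∀ m : Fin n → ℤ,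
    (∑' m' : {m' : Fin n → ℤ // dyadicCube n j m' ⊆ dyadicCube n k m},
        gammaHat n d p γ j m'.1 ^ p.toReal) ≤
      C * (2 : ℝ≥0∞) ^ ((((k : ℝ) - (j : ℝ)) * (d : ℝ)) * δ) * gammaHat n d p γ k m ^ p.toReal

/-- `δ₁(γ,n,d)`. -/
def delta1 (n d : ℕ) (p : ℝ≥0∞) (γ : Rn (n + d) → ℝ) : ℝ :=
  sSup {δ : ℝ | 0 < δ ∧ delta1Good n d p γ δ}

def delta2Good (n d : ℕ) (p : ℝ≥0∞) (γ : Rn (n + d) → ℝ) (δ : ℝ) : Prop :=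
  ∃ C : ℝ≥0∞, C < ∞ ∧ ∀ k j : ℕ, k ≤ j → ∀ m : Fin n → ℤ,
    ∀ G : Set (Fin n → ℤ), (∀ m' ∈ G, dyadicCube n j m' ⊆ dyadicCube n k m) →
      (∑' m' : G, gammaHat n d p γ j m'.1 ^ p.toReal) ≤
        C * (volume (⋃ m' ∈ G, dyadicCube n j m') / volume (dyadicCube n k m)) ^ δ *
          ∑' m' : {m' : Fin n → ℤ // dyadicCube n j m' ⊆ dyadicCube n k m},
            gammaHat n d p γ j m'.1 ^ p.toReal

/-- `δ₂(γ,n,d)`. -/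
def delta2 (n d : ℕ) (p : ℝ≥0∞) (γ : Rn (n + d) → ℝ) : ℝ :=
  sSup {δ : ℝ | 0 < δ ∧ delta2Good n d p γ δ}

/-- The cardinal B-spline of degree `deg` with knots `0, 1, …, deg + 1`. -/
def cardB : ℕ → ℝ → ℝ
  | 0, x => if 0 ≤ x ∧ x < 1 then 1 else 0
  | (d + 1), x => (x / (d + 1)) * cardB d x + (((d : ℝ) + 2 - x) / (d + 1)) * cardB d (x - 1)

/-- The tensor-product B-spline `N^{deg}_{k,m}` on `ℝⁿ`. -/
def Bspl (n deg k : ℕ) (m : Fin n → ℤ) (x : Rn n) : ℝ :=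
  ∏ i, cardB deg (2 ^ k * x i - (m i : ℝ))

/-- The spline `Σ_m β_m N^{deg}_{k,m}`. -/
def splineSum (n deg k : ℕ) (β : (Fin n → ℤ) → ℝ) (x : Rn n) : ℝ :=
  ∑' m, β m * Bspl n deg k m x

/-- A dyadic spline of degree `deg` (an element of `Σ^{deg} = ⋃_k Σ^{deg}_k`). -/
def IsSplineFn (n deg : ℕ) (S : Rn n → ℝ) : Prop :=
  ∃ (k : ℕ) (β : (Fin n → ℤ) → ℝ), S = splineSum n deg k β

/-- The weighted best spline approximation `s_k(φ)` by splines of degree `deg`. -/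
def sApprox (n deg : ℕ) (p r : ℝ≥0∞) (T : ℕ → (Fin n → ℤ) → ℝ≥0∞) (φ : Rn n → ℝ) (k : ℕ) :
    ℝ≥0∞ :=
  ⨅ β : (Fin n → ℤ) → ℝ,
    lqNorm p (fun m => T k m *
      eLpNorm (fun x => φ x - splineSum n deg k β x) r (volume.restrict (dyadicCube n k m)))

/-- `s_j(φ)` for `j ∈ {-1, 0, 1, 2, …}`, including the term `s_{-1}`. -/
def sApproxZ (n deg : ℕ) (p r : ℝ≥0∞) (T : ℕ → (Fin n → ℤ) → ℝ≥0∞) (φ : Rn n → ℝ) (j : ℤ) :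
    ℝ≥0∞ :=
  if j < 0 then
    lqNorm p (fun m => T 0 m * eLpNorm φ r (volume.restrict (dyadicCube n 0 m)))
  else sApprox n deg p r T φ j.toNat

/-- Local best polynomial approximation `E_l(φ,Q)_r` by polynomials of total degree `< l`. -/
def bestApproxE (n l : ℕ) (r : ℝ≥0∞) (φ : Rn n → ℝ) (Q : Set (Rn n)) : ℝ≥0∞ :=
  ⨅ P : {P : MvPolynomial (Fin n) ℝ // P.totalDegree < l},
    eLpNorm (fun x => φ x - MvPolynomial.eval x P.1) r (volume.restrict Q)

/-- The modulus of continuity `ω_l(φ,Q)_r`. -/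
def modulusE (n l : ℕ) (r : ℝ≥0∞) (φ : Rn n → ℝ) (Q : Set (Rn n)) : ℝ≥0∞ :=
  ⨆ h : Rn n, eLpNorm (difflOn l Q h φ) r (volume : Measure (Rn n))

def partialDeriv {N : ℕ} (i : Fin N) (ψ : Rn N → ℝ) : Rn N → ℝ :=
  fun x => fderiv ℝ ψ x (Pi.single i 1)

def iterPD {N : ℕ} : List (Fin N) → (Rn N → ℝ) → Rn N → ℝ
  | [], ψ => ψ
  | i :: L, ψ => partialDeriv i (iterPD L ψ)

def multiIdxList {N : ℕ} (α : Fin N → ℕ) : List (Fin N) :=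
  (List.finRange N).foldr (fun i L => List.replicate (α i) i ++ L) []

/-- Iterated partial derivative `D^α`. -/
def multiDeriv {N : ℕ} (α : Fin N → ℕ) (ψ : Rn N → ℝ) : Rn N → ℝ :=
  iterPD (multiIdxList α) ψ

/-- `g` is the weak (Sobolev) derivative `D^α f`. -/
def IsWeakDeriv {N : ℕ} (α : Fin N → ℕ) (f g : Rn N → ℝ) : Prop :=
  ∀ ψ : Rn N → ℝ, ContDiff ℝ (⊤ : ℕ∞) ψ → HasCompactSupport ψ →
    ∫ x, f x * multiDeriv α ψ x = (-1 : ℝ) ^ (∑ i, α i) * ∫ x, g x * ψ x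

/-- The weighted Sobolev norm `Σ_{|α| ≤ l} ‖γ · D^α f‖_{L_p}` computed from a system `D` of
weak derivatives. -/
def sobNorm (N : ℕ) (p : ℝ≥0∞) (l : ℕ) (γ : Rn N → ℝ) (D : (Fin N → ℕ) → Rn N → ℝ) : ℝ≥0∞ :=
  ∑' α : Fin N → ℕ,
    if (∑ i, α i) ≤ l then eLpNorm (fun x => γ x * D α x) p volume else 0

/-- Membership in the weighted Sobolev space `W^l_p(ℝ^N, γ)`, witnessed by the system `D`
of weak derivatives of `f`. -/
def MemW (N : ℕ) (p : ℝ≥0∞) (l : ℕ) (γ : Rn N → ℝ) (f : Rn N → ℝ)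
    (D : (Fin N → ℕ) → Rn N → ℝ) : Prop :=
  MeasureTheory.LocallyIntegrable f volume ∧ D 0 = f ∧
    (∀ α : Fin N → ℕ, (∑ i, α i) ≤ l →
      MeasureTheory.LocallyIntegrable (D α) volume ∧ IsWeakDeriv α f (D α)) ∧
    sobNorm N p l γ D < ∞

/-- `φ` is the trace of `f` on the plane `y = 0`. -/
def IsTraceSob {n d : ℕ} (f : Rn (n + d) → ℝ) (φ : Rn n → ℝ) : Prop :=
  ∃ f' : Rn (n + d) → ℝ, f' =ᵐ[volume] f ∧
    ∀ (c : Rn n) (s : ℝ), 0 < s →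
      Filter.Tendsto (fun y : Rn d => ∫ x in cubeAt c s, |f' (Fin.append x y) - φ x|)
        (nhds 0) (nhds 0)

/-- The weight sequence `γ_k(x) = 2^{k(l+n/p)} Σ_m χ_{Q̃^n_{k,m}}(x) γ̂_{k,m}`. -/
def gammaSeq (n d : ℕ) (p : ℝ≥0∞) (l : ℕ) (γ : Rn (n + d) → ℝ) (k : ℕ) (x : Rn n) : ℝ≥0∞ :=
  (2 : ℝ≥0∞) ^ ((k : ℝ) * ((l : ℝ) + (n : ℝ) / p.toReal)) *
    ∑' m : Fin n → ℤ, (dyadicCubeHalf n k m).indicator (fun _ => gammaHat n d p γ k m) x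

/-- Conjugate exponent in `ℝ≥0∞`. -/
def conjE (e : ℝ≥0∞) : ℝ≥0∞ := (1 - e⁻¹)⁻¹

/-- The exponent `p_θ`. -/
def pTheta (p θ : ℝ≥0∞) : ℝ≥0∞ := if θ = ∞ ∧ p = ∞ then 1 else p / θ

lemma openCube_eq_ball {n : ℕ} (x : Rn n) {s : ℝ} (hs : 0 < s) :
    openCube x s = Metric.ball x s := by
  ext y
  simp [openCube, Metric.mem_ball, dist_pi_lt_iff hs, Real.dist_eq]

lemma measurableSet_openCube {n : ℕ} (x : Rn n) (s : ℝ) : MeasurableSet (openCube x s) := by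
  have : openCube x s = ⋂ i, {y : Rn n | |y i - x i| < s} := by
    ext y; simp [openCube]
  rw [this]
  refine MeasurableSet.iInter fun i => measurableSet_lt ?_ measurable_const
  have : Continuous fun y : Rn n => |y i - x i| := by fun_prop
  exact this.measurable

lemma volume_openCube {n : ℕ} (x : Rn n) {s : ℝ} (hs : 0 < s) :
    volume (openCube x s) = ENNReal.ofReal (2 * s) ^ n := by
  rw [openCube_eq_ball x hs, Real.volume_pi_ball x hs, Fintype.card_fin,
    ENNReal.ofReal_pow (by positivity)]

/-- shift operator -/
def shiftOp {n : ℕ} (h : Rn n) : Module.End ℝ (Rn n → ℝ) where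
  toFun g := fun x => g (x + h)
  map_add' _ _ := rfl
  map_smul' _ _ := rfl

lemma shiftOp_pow {n : ℕ} (h : Rn n) (j : ℕ) (g : Rn n → ℝ) (x : Rn n) :
    (shiftOp h ^ j) g x = g (x + (j : ℝ) • h) := by
  induction j generalizing x with
  | zero => simp
  | succ j ih =>
    rw [pow_succ', Module.End.mul_apply]
    change (shiftOp h ^ j) g (x + h) = _
    rw [ih]
    congr 1
    push_cast
    module

lemma diffl_eq {n : ℕ} (l : ℕ) (h : Rn n) (g : Rn n → ℝ) (x : Rn n) :
    diffl l h g x = ((shiftOp h - 1) ^ l) g x := by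
  have hc : Commute (shiftOp h) (-1 : Module.End ℝ (Rn n → ℝ)) := by
    change _ * _ = _ * _
    ext g x
    simp
  rw [sub_eq_add_neg, hc.add_pow]
  simp only [LinearMap.sum_apply, Finset.sum_apply, diffl]
  refine Finset.sum_congr rfl fun j hj => ?_
  have hj' : j ≤ l := Nat.lt_succ_iff.mp (Finset.mem_range.mp hj)
  have e : (shiftOp h ^ j * (-1 : Module.End ℝ (Rn n → ℝ)) ^ (l - j) * (l.choose j : Module.End ℝ (Rn n → ℝ)))
      = ((l.choose j : ℝ) * (-1 : ℝ) ^ (l + j)) • shiftOp h ^ j := by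
    have e1 : (-1 : ℝ) ^ (l + j) = (-1) ^ (l - j) := by
      have : l + j = (l - j) + 2 * j := by omega
      rw [this, pow_add, pow_mul]; simp
    rw [e1]
    have e2 : (-1 : Module.End ℝ (Rn n → ℝ)) ^ (l - j) = ((-1 : ℝ) ^ (l - j)) • 1 := by
      have e4 : (-1 : Module.End ℝ (Rn n → ℝ)) = (-1 : ℝ) • 1 := by
        ext g x
        simp
      rw [e4, smul_pow, one_pow]
    have e3 : (l.choose j : Module.End ℝ (Rn n → ℝ)) = (l.choose j : ℝ) • 1 := by
      rw [← nsmul_one, Nat.cast_smul_eq_nsmul]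
    rw [e2, e3]
    simp [smul_smul]
  rw [e]
  simp [shiftOp_pow]

lemma diffl_double {n : ℕ} (l : ℕ) (h : Rn n) (g : Rn n → ℝ) (x : Rn n) :
    diffl l ((2 : ℝ) • h) g x =
      ∑ j ∈ Finset.range (l + 1), (l.choose j : ℝ) * diffl l h g (x + (j : ℝ) • h) := by
  have e0 : shiftOp ((2 : ℝ) • h) = shiftOp h ^ 2 := by
    ext g x
    rw [shiftOp_pow]; simp [shiftOp]
  have hcc : Commute (shiftOp h + 1) (shiftOp h - 1) := by
    have : Commute (shiftOp h) (shiftOp h - 1) := (Commute.refl _).sub_right (Commute.one_right _)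
    exact this.add_left (Commute.one_left _)
  have e1 : shiftOp h ^ 2 - 1 = (shiftOp h + 1) * (shiftOp h - 1) := by
    ext g x
    simp [pow_two]
  rw [diffl_eq, e0, e1, hcc.mul_pow, (Commute.one_right (shiftOp h)).add_pow]
  simp only [Module.End.mul_apply, LinearMap.sum_apply, Finset.sum_apply, one_pow, mul_one]
  refine Finset.sum_congr rfl fun j _ => ?_
  rw [diffl_eq, ← shiftOp_pow h j (((shiftOp h - 1) ^ l) g) x]
  have e3 : (l.choose j : Module.End ℝ (Rn n → ℝ)) = (l.choose j : ℝ) • 1 := by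
    rw [← nsmul_one, Nat.cast_smul_eq_nsmul]
  rw [e3]
  simp

lemma exists_bound {n : ℕ} (l : ℕ) (h : Rn n) (g : Rn n → ℝ) (x : Rn n) :
    ∃ j ∈ Finset.range (l + 1), ‖diffl l h g x‖ₑ ≤
      2 ^ l * ‖diffl l ((1 / 2 : ℝ) • h) g (x + (j : ℝ) • ((1 / 2 : ℝ) • h))‖ₑ := by
  set h' := (1 / 2 : ℝ) • h with hh'
  have e : h = (2 : ℝ) • h' := by rw [hh', smul_smul]; norm_num
  obtain ⟨j, hj, hmax⟩ := Finset.exists_max_image (Finset.range (l + 1))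
    (fun j : ℕ => ‖diffl l h' g (x + (j : ℝ) • h')‖ₑ) ⟨0, by simp⟩
  refine ⟨j, hj, ?_⟩
  rw [e, diffl_double]
  calc _ ≤ ∑ i ∈ Finset.range (l + 1), ‖(l.choose i : ℝ) * diffl l h' g (x + (i : ℝ) • h')‖ₑ :=
        enorm_sum_le _ _
    _ ≤ ∑ i ∈ Finset.range (l + 1), (l.choose i : ℝ≥0∞) * ‖diffl l h' g (x + (j : ℝ) • h')‖ₑ := by
        refine Finset.sum_le_sum fun i hi => ?_
        rw [enorm_mul]
        have : ‖(l.choose i : ℝ)‖ₑ = (l.choose i : ℝ≥0∞) := by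
          rw [Real.enorm_eq_ofReal (by positivity), ENNReal.ofReal_natCast]
        rw [this]
        gcongr
        exact hmax i hi
    _ = _ := by
        rw [← Finset.sum_mul, ← Nat.cast_sum, Nat.sum_range_choose]; push_cast; rfl

lemma measurable_diffl {n : ℕ} (l : ℕ) {g : Rn n → ℝ} (hg : Measurable g) :
    Measurable fun z : Rn n × Rn n => diffl l z.1 g z.2 := by
  unfold diffl
  refine Finset.measurable_sum _ fun j _ => ?_
  refine Measurable.const_mul (hg.comp ?_) _
  fun_prop

lemma lintegral_half {n : ℕ} (g : Rn n → ℝ≥0∞) (hg : Measurable g) :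
    ∫⁻ h, g ((1 / 2 : ℝ) • h) = 2 ^ n * ∫⁻ h, g h := by
  have := Measure.map_addHaar_smul (volume : Measure (Rn n)) (r := (1 / 2 : ℝ)) (by norm_num)
  rw [← lintegral_map hg (by fun_prop : Measurable fun h : Rn n => (1 / 2 : ℝ) • h), this,
    lintegral_smul_measure]
  simp [abs_of_pos]

lemma shift_int {n : ℕ} (l : ℕ) (f : Rn n × Rn n → ℝ≥0∞) (hf : Measurable f) (x : Rn n)
    {a : ℝ} :
    ∫⁻ h in openCube (0 : Rn n) (2 * a), ∫⁻ y in openCube x a,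
      ∑ j ∈ Finset.range (l + 1), f ((1 / 2 : ℝ) • h, y + (j : ℝ) • ((1 / 2 : ℝ) • h)) ≤
    2 ^ n * (l + 1) * ∫⁻ y in openCube x ((l + 1) * a), ∫⁻ h in openCube (0 : Rn n) a, f (h, y) := by
  set G : Rn n → ℝ≥0∞ := fun h => ∫⁻ y in openCube x a,
      ∑ j ∈ Finset.range (l + 1), f (h, y + (j : ℝ) • h) with hG
  have hGm : Measurable G := by
    apply Measurable.lintegral_prod_right (f := fun h : Rn n => fun y : Rn n =>
      ∑ j ∈ Finset.range (l + 1), f (h, y + (j : ℝ) • h))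
    refine Finset.measurable_sum _ fun j _ => ?_
    refine hf.comp ?_
    fun_prop
  have h1 : ∫⁻ h in openCube (0 : Rn n) (2 * a), G ((1 / 2 : ℝ) • h) =
      2 ^ n * ∫⁻ h in openCube (0 : Rn n) a, G h := by
    rw [← lintegral_indicator (measurableSet_openCube _ _),
      ← lintegral_indicator (measurableSet_openCube _ _),
      ← lintegral_half _ (hGm.indicator (measurableSet_openCube _ _))]
    congr 1
    ext h
    have : h ∈ openCube (0 : Rn n) (2 * a) ↔ (1 / 2 : ℝ) • h ∈ openCube (0 : Rn n) a := by
      simp only [openCube, Set.mem_ofPred_eq, Pi.zero_apply, sub_zero, Pi.smul_apply, smul_eq_mul,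
        abs_mul]
      refine forall_congr' fun i => ?_
      rw [abs_of_pos (by norm_num : (0 : ℝ) < 1 / 2)]
      constructor <;> intro h <;> linarith
    by_cases hh : h ∈ openCube (0 : Rn n) (2 * a)
    · rw [Set.indicator_of_mem hh, Set.indicator_of_mem (this.1 hh)]
    · rw [Set.indicator_of_notMem hh, Set.indicator_of_notMem (fun h' => hh (this.2 h'))]
  have h2 : ∀ h ∈ openCube (0 : Rn n) a,
      G h ≤ (l + 1) * ∫⁻ y in openCube x ((l + 1) * a), f (h, y) := by
    intro h hh
    have hfm : ∀ j : ℕ, Measurable fun y : Rn n => f (h, y + (j : ℝ) • h) := by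
      intro j; exact hf.comp (by fun_prop)
    rw [hG]
    simp only
    rw [lintegral_finsetSum _ (fun j _ => hfm j)]
    calc _ ≤ ∑ j ∈ Finset.range (l + 1), ∫⁻ y in openCube x ((l + 1) * a), f (h, y) := by
          refine Finset.sum_le_sum fun j hj => ?_
          have hj' : j ≤ l := Nat.lt_succ_iff.mp (Finset.mem_range.mp hj)
          rw [← lintegral_indicator (measurableSet_openCube _ _),
            ← lintegral_indicator (measurableSet_openCube _ _),
            ← lintegral_add_right_eq_self
              ((openCube x ((l + 1) * a)).indicator fun y => f (h, y)) ((j : ℝ) • h)]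
          refine lintegral_mono fun y => ?_
          by_cases hy : y ∈ openCube x a
          · rw [Set.indicator_of_mem hy, Set.indicator_of_mem]
            intro i
            have hyi := hy i
            have hhi := hh i
            simp only [Pi.zero_apply, sub_zero] at hhi
            simp only [Pi.add_apply, Pi.smul_apply, smul_eq_mul]
            have : y i + j * h i - x i = (y i - x i) + j * h i := by ring
            rw [this]
            have hjl : (j : ℝ) ≤ l := by exact_mod_cast hj'
            calc _ ≤ |y i - x i| + |j * h i| := abs_add_le _ _
              _ = |y i - x i| + j * |h i| := by rw [abs_mul, abs_of_nonneg (Nat.cast_nonneg (α := ℝ) j)]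
              _ < a + l * a := by
                refine add_lt_add_of_lt_of_le hyi ?_
                exact mul_le_mul hjl hhi.le (abs_nonneg _) (Nat.cast_nonneg _)
              _ = _ := by ring
          · rw [Set.indicator_of_notMem hy]; exact zero_le
      _ = _ := by simp
  calc _ = 2 ^ n * ∫⁻ h in openCube (0 : Rn n) a, G h := h1
    _ ≤ 2 ^ n * ∫⁻ h in openCube (0 : Rn n) a,
          (l + 1) * ∫⁻ y in openCube x ((l + 1) * a), f (h, y) := by
        gcongr 2 ^ n * ?_
        exact setLIntegral_mono' (measurableSet_openCube _ _) h2
    _ = _ := by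
        rw [lintegral_const_mul _ hf.lintegral_prod_right', ← mul_assoc,
          lintegral_lintegral_swap (f := fun h y => f (h, y)) hf.aemeasurable]

lemma mem_cube_shift {n l j : ℕ} (hj : j ∈ Finset.range (l + 1)) {a : ℝ} {x y h : Rn n}
    (hh : h ∈ openCube (0 : Rn n) (2 * a)) (hy : y ∈ openCube x a) :
    y + (j : ℝ) • ((1 / 2 : ℝ) • h) ∈ openCube x ((l + 1) * a) := by
  intro i
  have hj' : j ≤ l := Nat.lt_succ_iff.mp (Finset.mem_range.mp hj)
  have hyi := hy i
  have hhi := hh i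
  simp only [Pi.zero_apply, sub_zero] at hhi
  simp only [Pi.add_apply, Pi.smul_apply, smul_eq_mul]
  have : y i + j * (1 / 2 * h i) - x i = (y i - x i) + (j / 2) * h i := by ring
  rw [this]
  have hjl : (j : ℝ) ≤ l := by exact_mod_cast hj'
  calc _ ≤ |y i - x i| + |(j / 2 : ℝ) * h i| := abs_add_le _ _
    _ = |y i - x i| + (j / 2) * |h i| := by
      rw [abs_mul, abs_of_nonneg (by positivity : (0 : ℝ) ≤ j / 2)]
    _ < a + (l / 2) * (2 * a) := by
      refine add_lt_add_of_lt_of_le hyi ?_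
      exact mul_le_mul (by linarith) hhi.le (abs_nonneg _) (by positivity)
    _ = _ := by ring

lemma T_chain {n : ℕ} {A : ℝ≥0∞} (T : (Fin n → ℤ) → ℝ≥0∞)
    (hT : ∀ m m' : Fin n → ℤ, (∀ i, |m i - m' i| ≤ 1) → T m ≤ A * T m') (N : ℕ) :
    ∀ m m' : Fin n → ℤ, (∀ i, |m i - m' i| ≤ N) → T m ≤ A ^ N * T m' := by
  induction N with
  | zero =>
    intro m m' h
    have : m = m' := by
      funext i
      have := h i
      simp only [Nat.cast_zero, abs_nonpos_iff] at this
      omega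
    simp [this]
  | succ N ih =>
    intro m m' h
    let m'' : Fin n → ℤ := fun i => if m' i < m i then m i - 1 else if m i < m' i then m i + 1 else m i
    have h1 : ∀ i, |m i - m'' i| ≤ 1 := by
      intro i
      simp only [m'']
      rw [abs_le]
      split_ifs <;> constructor <;> omega
    have h2 : ∀ i, |m'' i - m' i| ≤ N := by
      intro i
      have := h i
      simp only [m'']
      rw [abs_le] at this ⊢
      push_cast at this
      split_ifs <;> constructor <;> omega
    calc T m ≤ A * T m'' := hT _ _ h1
      _ ≤ A * (A ^ N * T m') := by gcongr; exact ih _ _ h2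
      _ = _ := by ring

lemma mem_half_iff {n k : ℕ} (m : Fin n → ℤ) (x : Rn n) :
    x ∈ dyadicCubeHalf n k m ↔ m = fun i => ⌊x i * 2 ^ k⌋ := by
  have h2 : (0 : ℝ) < 2 ^ k := by positivity
  rw [funext_iff]
  simp only [dyadicCubeHalf, Set.mem_ofPred_eq]
  refine forall_congr' fun i => ?_
  rw [eq_comm, Int.floor_eq_iff, div_le_iff₀ h2, lt_div_iff₀ h2]

lemma tbarOf_eq {n : ℕ} (p : ℝ≥0∞) (T : ℕ → (Fin n → ℤ) → ℝ≥0∞) (k : ℕ) (x : Rn n) :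
    tbarOf n p T k x = (2 : ℝ≥0∞) ^ (((k * n : ℕ) : ℝ) / p.toReal) *
      T k (fun i => ⌊x i * 2 ^ k⌋) := by
  unfold tbarOf
  congr 1
  rw [tsum_eq_single (fun i => ⌊x i * 2 ^ k⌋)]
  · rw [Set.indicator_of_mem ((mem_half_iff _ _).2 rfl)]
  · intro m hm
    rw [Set.indicator_of_notMem]
    intro h
    exact hm ((mem_half_iff _ _).1 h)

lemma tbar_compare {n : ℕ} (p : ℝ≥0∞) {A : ℝ≥0∞} (T : ℕ → (Fin n → ℤ) → ℝ≥0∞) (k : ℕ)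
    (hT : ∀ m m' : Fin n → ℤ, (∀ i, |m i - m' i| ≤ 1) → T k m ≤ A * T k m') (N : ℕ)
    (x y : Rn n) (hxy : ∀ i, |y i - x i| < N * (2 : ℝ) ^ (-(k : ℤ))) :
    tbarOf n p T k x ≤ A ^ (N + 1) * tbarOf n p T k y := by
  rw [tbarOf_eq, tbarOf_eq]
  have := T_chain (T k) hT (N + 1) (fun i => ⌊x i * 2 ^ k⌋) (fun i => ⌊y i * 2 ^ k⌋) (by
    intro i
    have h := hxy i
    have h2 : (0 : ℝ) < 2 ^ k := by positivity
    rw [zpow_neg, zpow_natCast, ← div_eq_mul_inv, lt_div_iff₀ h2, ← abs_of_pos h2, ← abs_mul, abs_lt] at h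
    have a1 := Int.floor_le (x i * 2 ^ k)
    have a2 := Int.lt_floor_add_one (x i * 2 ^ k)
    have b1 := Int.floor_le (y i * 2 ^ k)
    have b2 := Int.lt_floor_add_one (y i * 2 ^ k)
    have c1 : ((⌊x i * 2 ^ k⌋ : ℤ) : ℝ) < ((⌊y i * 2 ^ k⌋ + (N + 1) : ℤ) : ℝ) := by
      push_cast; nlinarith
    have c2 : ((⌊y i * 2 ^ k⌋ : ℤ) : ℝ) < ((⌊x i * 2 ^ k⌋ + (N + 1) : ℤ) : ℝ) := by
      push_cast; nlinarith
    rw [Int.cast_lt] at c1 c2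
    rw [abs_le]
    push_cast
    constructor <;> omega)
  calc _ ≤ (2 : ℝ≥0∞) ^ (((k * n : ℕ) : ℝ) / p.toReal) *
        (A ^ (N + 1) * T k (fun i => ⌊y i * 2 ^ k⌋)) := by gcongr
    _ = _ := by ring

lemma lqNorm_le {ι : Type*} {q : ℝ≥0∞} (hq : 0 < q) {c d : ι → ℝ≥0∞} {C : ℝ≥0∞}
    (h : ∀ i, c i ≤ C * d i) : lqNorm q c ≤ C * lqNorm q d := by
  unfold lqNorm
  split_ifs with hq'
  · rw [ENNReal.mul_iSup]
    exact iSup_mono h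
  · have hq0 : 0 < q.toReal := ENNReal.toReal_pos hq.ne' hq'
    calc _ ≤ (∑' i, C ^ q.toReal * d i ^ q.toReal) ^ (1 / q.toReal) := by
          gcongr with i
          rw [← ENNReal.mul_rpow_of_nonneg _ _ hq0.le]
          gcongr
          exact h i
      _ = _ := by
          rw [ENNReal.tsum_mul_left, ENNReal.mul_rpow_of_nonneg _ _ (by positivity), one_div,
            ENNReal.rpow_rpow_inv hq0.ne']

lemma eLpNorm_rpow {α : Type*} [MeasurableSpace α] {μ : Measure α} (f : α → ℝ) {r : ℝ≥0∞}
    (hr : r ≠ 0) (hr' : r ≠ ∞) :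
    eLpNorm f r μ ^ r.toReal = ∫⁻ x, ‖f x‖ₑ ^ r.toReal ∂μ := by
  have h0 := ENNReal.toReal_pos hr hr'
  rw [eLpNorm_eq_lintegral_rpow_enorm_toReal hr hr', one_div, ENNReal.rpow_inv_rpow h0.ne']

lemma mul_rpow_aux {c b e : ℝ≥0∞} {d ρ : ℝ} (hρ : 0 < ρ) :
    (b * (c ^ (d / ρ) * e)) ^ ρ = b ^ ρ * (c ^ d * e ^ ρ) := by
  rw [ENNReal.mul_rpow_of_nonneg _ _ hρ.le, ENNReal.mul_rpow_of_nonneg _ _ hρ.le,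
    ← ENNReal.rpow_mul, div_mul_cancel₀ _ hρ.ne']

lemma measurable_barDelta {n : ℕ} (l : ℕ) {r : ℝ≥0∞} (hr : r ≠ 0) (hr' : r ≠ ∞) (a : ℝ)
    {φ : Rn n → ℝ} (hφ : Measurable φ) : Measurable (barDelta n l r a φ) := by
  unfold barDelta
  refine Measurable.const_mul ?_ _
  simp only [eLpNorm_eq_lintegral_rpow_enorm_toReal hr hr']
  refine Measurable.pow_const ?_ _
  have : Measurable fun z : Rn n × Rn n => ‖diffl l z.1 φ z.2‖ₑ ^ r.toReal :=
    (measurable_diffl l hφ).enorm.pow_const _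
  exact this.lintegral_prod_left'

lemma pointwise_fin {n : ℕ} (l : ℕ) {r : ℝ≥0∞} (hr : r ≠ 0) (hr' : r ≠ ∞) {a : ℝ} (ha : 0 < a)
    {φ : Rn n → ℝ} (hφ : Measurable φ) {W : Rn n → ℝ≥0∞} (hWm : Measurable W) {K : ℝ≥0∞}
    (x : Rn n) (hW : ∀ y ∈ openCube x ((l + 1) * a), W x ≤ K * W y) :
    (W x * deltaE n l r (2 * a) (openCube x a) φ) ^ r.toReal ≤
      ((K * 2 ^ l) ^ r.toReal * (2 ^ n * (l + 1))) * (ENNReal.ofReal a ^ (-(n : ℝ)) *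
        ∫⁻ y in openCube x ((l + 1) * a), (W y * barDelta n l r a φ y) ^ r.toReal) := by
  set ρ := r.toReal with hρdef
  have hρ : 0 < ρ := ENNReal.toReal_pos hr hr'
  have ha0 : ENNReal.ofReal a ≠ 0 := by simpa using ha
  have hat : ENNReal.ofReal a ≠ ∞ := ENNReal.ofReal_ne_top
  have hdm := measurable_diffl l hφ
  set f : Rn n × Rn n → ℝ≥0∞ := fun z => (W z.2 * ‖diffl l z.1 φ z.2‖ₑ) ^ ρ with hf
  have hfm : Measurable f := ((hWm.comp measurable_snd).mul hdm.enorm).pow_const _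
  -- bar side
  have hbar : ∀ y, ∫⁻ h in openCube (0 : Rn n) a, f (h, y) =
      ENNReal.ofReal a ^ (n : ℝ) * (W y * barDelta n l r a φ y) ^ ρ := by
    intro y
    rw [barDelta, mul_rpow_aux hρ, hρdef, eLpNorm_rpow _ hr hr', ← hρdef]
    simp only [hf]
    have : Measurable fun h : Rn n => ‖diffl l h φ y‖ₑ ^ ρ :=
      (hdm.comp (by fun_prop : Measurable fun h : Rn n => (h, y))).enorm.pow_const _
    simp_rw [ENNReal.mul_rpow_of_nonneg _ _ hρ.le]
    rw [lintegral_const_mul _ this]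
    calc _ = (ENNReal.ofReal a ^ (n : ℝ) * ENNReal.ofReal a ^ (-(n : ℝ))) *
          (W y ^ ρ * ∫⁻ h in openCube (0 : Rn n) a, ‖diffl l h φ y‖ₑ ^ ρ) := by
            rw [← ENNReal.rpow_add _ _ ha0 hat]; simp
      _ = _ := by ring
  -- tilde side
  have htil : (W x * deltaE n l r (2 * a) (openCube x a) φ) ^ ρ =
      ENNReal.ofReal (2 * a) ^ (-(2 * (n : ℝ))) *
      ∫⁻ h in openCube (0 : Rn n) (2 * a), ∫⁻ y in openCube x a,
        (W x * ‖diffl l h φ y‖ₑ) ^ ρ := by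
    rw [deltaE, mul_rpow_aux hρ, hρdef, eLpNorm_rpow _ hr hr', ← hρdef,
      lintegral_prod _ (hdm.enorm.pow_const _).aemeasurable]
    simp_rw [ENNReal.mul_rpow_of_nonneg _ _ hρ.le]
    have h1 : ∀ h : Rn n, ∫⁻ y in openCube x a, W x ^ ρ * ‖diffl l h φ y‖ₑ ^ ρ =
        W x ^ ρ * ∫⁻ y in openCube x a, ‖diffl l h φ y‖ₑ ^ ρ := by
      intro h
      rw [lintegral_const_mul]
      exact (hdm.comp (by fun_prop : Measurable fun y : Rn n => (h, y))).enorm.pow_const _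
    simp_rw [h1]
    rw [lintegral_const_mul]
    · ring
    · exact (hdm.enorm.pow_const ρ).lintegral_prod_right'
  have hkey : ∫⁻ h in openCube (0 : Rn n) (2 * a), ∫⁻ y in openCube x a,
        (W x * ‖diffl l h φ y‖ₑ) ^ ρ ≤ (K * 2 ^ l) ^ ρ *
      ∫⁻ h in openCube (0 : Rn n) (2 * a), ∫⁻ y in openCube x a,
      ∑ j ∈ Finset.range (l + 1), f ((1 / 2 : ℝ) • h, y + (j : ℝ) • ((1 / 2 : ℝ) • h)) := by
    have hS : Measurable fun z : Rn n × Rn n => ∑ j ∈ Finset.range (l + 1),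
        f ((1 / 2 : ℝ) • z.1, z.2 + (j : ℝ) • ((1 / 2 : ℝ) • z.1)) := by
      refine Finset.measurable_sum _ fun j _ => hfm.comp ?_
      fun_prop
    rw [← lintegral_const_mul _ hS.lintegral_prod_right']
    refine setLIntegral_mono' (measurableSet_openCube _ _) fun h hh => ?_
    have hSh : Measurable fun y : Rn n => ∑ j ∈ Finset.range (l + 1),
        f ((1 / 2 : ℝ) • h, y + (j : ℝ) • ((1 / 2 : ℝ) • h)) :=
      hS.comp (by fun_prop : Measurable fun y : Rn n => (h, y))
    dsimp only
    rw [← lintegral_const_mul _ hSh]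
    refine setLIntegral_mono' (measurableSet_openCube _ _) fun y hy => ?_
    obtain ⟨j, hj, hb⟩ := exists_bound l h φ y
    have hmem := mem_cube_shift hj hh hy
    calc (W x * ‖diffl l h φ y‖ₑ) ^ ρ ≤ ((K * W (y + (j : ℝ) • ((1 / 2 : ℝ) • h))) *
          (2 ^ l * ‖diffl l ((1 / 2 : ℝ) • h) φ (y + (j : ℝ) • ((1 / 2 : ℝ) • h))‖ₑ)) ^ ρ := by
          gcongr
          exact hW _ hmem
      _ = (K * 2 ^ l) ^ ρ * f ((1 / 2 : ℝ) • h, y + (j : ℝ) • ((1 / 2 : ℝ) • h)) := by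
          simp only [hf]
          rw [← ENNReal.mul_rpow_of_nonneg _ _ hρ.le]
          congr 1
          ring
      _ ≤ _ := by
          gcongr
          exact Finset.single_le_sum
            (f := fun j : ℕ => f ((1 / 2 : ℝ) • h, y + (j : ℝ) • ((1 / 2 : ℝ) • h)))
            (fun _ _ => zero_le) hj
  rw [htil]
  have hFm : Measurable fun y => (W y * barDelta n l r a φ y) ^ ρ :=
    (hWm.mul (measurable_barDelta l hr hr' a hφ)).pow_const _
  have hs := shift_int l f hfm x (a := a)
  simp_rw [hbar] at hs
  rw [lintegral_const_mul _ hFm] at hs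
  set I := ∫⁻ y in openCube x ((l + 1) * a), (W y * barDelta n l r a φ y) ^ ρ
  have hpow : ENNReal.ofReal (2 * a) ^ (-(2 * (n : ℝ))) ≤ ENNReal.ofReal a ^ (-(2 * (n : ℝ))) := by
    rw [ENNReal.rpow_neg, ENNReal.rpow_neg]
    gcongr
    linarith
  calc _ ≤ ENNReal.ofReal a ^ (-(2 * (n : ℝ))) * ((K * 2 ^ l) ^ ρ *
        (2 ^ n * (l + 1) * (ENNReal.ofReal a ^ (n : ℝ) * I))) :=
        mul_le_mul' hpow (hkey.trans (by gcongr))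
    _ = ((K * 2 ^ l) ^ ρ * (2 ^ n * (l + 1))) *
        ((ENNReal.ofReal a ^ (-(2 * (n : ℝ))) * ENNReal.ofReal a ^ (n : ℝ)) * I) := by ring
    _ = _ := by
        rw [← ENNReal.rpow_add _ _ ha0 hat]
        congr 4
        ring

lemma holder_aux {α : Type*} [MeasurableSpace α] {μ : Measure α} {F : α → ℝ≥0∞}
    (hF : Measurable F) {ρ π : ℝ} (hρ : 0 < ρ) (hρπ : ρ ≤ π) :
    (∫⁻ x, F x ^ ρ ∂μ) ^ (π / ρ) ≤ (∫⁻ x, F x ^ π ∂μ) * μ Set.univ ^ (π / ρ - 1) := by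
  have hπ : 0 < π := hρ.trans_le hρπ
  have h := eLpNorm'_le_eLpNorm'_mul_rpow_measure_univ (μ := μ) hρ hρπ hF.aestronglyMeasurable
  simp only [eLpNorm', enorm_eq_self] at h
  have h2 := ENNReal.rpow_le_rpow h hπ.le
  rw [ENNReal.mul_rpow_of_nonneg _ _ hπ.le, ← ENNReal.rpow_mul, ← ENNReal.rpow_mul,
    ← ENNReal.rpow_mul, one_div_mul_cancel hπ.ne', ENNReal.rpow_one, sub_mul,
    one_div_mul_cancel hπ.ne', one_div_mul_eq_div] at h2
  exact h2

lemma lintegral_cube_swap {n : ℕ} {F : Rn n → ℝ≥0∞} (hF : Measurable F) {b : ℝ} (hb : 0 < b) :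
    ∫⁻ x, ∫⁻ y in openCube x b, F y = ENNReal.ofReal (2 * b) ^ n * ∫⁻ y, F y := by
  have hset : MeasurableSet {z : Rn n × Rn n | z.2 ∈ openCube z.1 b} := by
    have : {z : Rn n × Rn n | z.2 ∈ openCube z.1 b} =
        (fun z : Rn n × Rn n => z.2 - z.1) ⁻¹' openCube 0 b := by
      ext z; simp [openCube]
    rw [this]
    exact (measurableSet_openCube _ _).preimage (by fun_prop)
  have hsymm : ∀ x y : Rn n, y ∈ openCube x b ↔ x ∈ openCube y b := by
    intro x y
    simp only [openCube, Set.mem_ofPred_eq]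
    exact forall_congr' fun i => by rw [abs_sub_comm]
  calc ∫⁻ x, ∫⁻ y in openCube x b, F y
      = ∫⁻ x, ∫⁻ y, (openCube x b).indicator F y := by
        congr 1; ext x; rw [lintegral_indicator (measurableSet_openCube _ _)]
    _ = ∫⁻ y, ∫⁻ x, (openCube x b).indicator F y := by
        refine lintegral_lintegral_swap (f := fun x y => (openCube x b).indicator F y) ?_
        exact ((hF.comp measurable_snd).indicator hset).aemeasurable
    _ = ∫⁻ y, ENNReal.ofReal (2 * b) ^ n * F y := by
        congr 1; ext y
        have : ∀ x, (openCube x b).indicator F y = (openCube y b).indicator (fun _ => F y) x := by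
          intro x
          by_cases h : y ∈ openCube x b
          · rw [Set.indicator_of_mem h, Set.indicator_of_mem ((hsymm x y).1 h)]
          · rw [Set.indicator_of_notMem h,
              Set.indicator_of_notMem (fun h' => h ((hsymm x y).2 h'))]
        simp_rw [this]
        rw [lintegral_indicator (measurableSet_openCube _ _), setLIntegral_const,
          volume_openCube y hb, mul_comm]
    _ = _ := lintegral_const_mul _ hF

/-- The abstract averaging estimate. -/
lemma avg_estimate {n : ℕ} {p : ℝ≥0∞} {ρ : ℝ} (hρ : 0 < ρ) (hρp : ENNReal.ofReal ρ ≤ p)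
    {F H : Rn n → ℝ≥0∞} (hF : Measurable F) {b : ℝ} (hb : 0 < b) {D : ℝ≥0∞}
    (h : ∀ x, H x ^ ρ ≤ D * ∫⁻ y in openCube x b, F y ^ ρ) :
    lpNormE p volume H ≤ (D * ENNReal.ofReal (2 * b) ^ n) ^ (1 / ρ) * lpNormE p volume F := by
  have hV0 : ENNReal.ofReal (2 * b) ^ n ≠ 0 := pow_ne_zero _ (by simpa using hb)
  have hVt : ENNReal.ofReal (2 * b) ^ n ≠ ∞ := ENNReal.pow_ne_top ENNReal.ofReal_ne_top
  set V := ENNReal.ofReal (2 * b) ^ n with hV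
  unfold lpNormE
  split_ifs with hp
  · refine essSup_le_of_ae_le _ (Eventually.of_forall fun x => ?_)
    set M := essSup F volume
    have h1 : H x ^ ρ ≤ D * V * M ^ ρ := by
      refine (h x).trans ?_
      rw [mul_assoc]
      gcongr
      calc _ ≤ ∫⁻ y in openCube x b, M ^ ρ := by
            refine lintegral_mono_ae ?_
            refine ae_restrict_of_ae ?_
            filter_upwards [ENNReal.ae_le_essSup F] with y hy
            gcongr
        _ = _ := by rw [setLIntegral_const, volume_openCube x hb, mul_comm]
    have h2 := ENNReal.rpow_le_rpow h1 (by positivity : 0 ≤ 1 / ρ)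
    rwa [ENNReal.mul_rpow_of_nonneg _ _ (by positivity), one_div, ENNReal.rpow_rpow_inv hρ.ne',
      ENNReal.rpow_rpow_inv hρ.ne', ← one_div] at h2
  · set π := p.toReal with hπd
    have hρπ : ρ ≤ π := by
      rw [← ENNReal.ofReal_toReal hp] at hρp
      exact (ENNReal.ofReal_le_ofReal_iff ENNReal.toReal_nonneg).1 hρp
    have hπ : 0 < π := hρ.trans_le hρπ
    have h1 : ∀ x, H x ^ π ≤ D ^ (π / ρ) * V ^ (π / ρ - 1) * ∫⁻ y in openCube x b, F y ^ π := by
      intro x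
      have e : H x ^ π = (H x ^ ρ) ^ (π / ρ) := by
        rw [← ENNReal.rpow_mul, mul_div_cancel₀ _ hρ.ne']
      rw [e]
      calc _ ≤ (D * ∫⁻ y in openCube x b, F y ^ ρ) ^ (π / ρ) :=
            ENNReal.rpow_le_rpow (h x) (by positivity)
        _ = D ^ (π / ρ) * (∫⁻ y in openCube x b, F y ^ ρ) ^ (π / ρ) :=
            ENNReal.mul_rpow_of_nonneg _ _ (by positivity)
        _ ≤ D ^ (π / ρ) * ((∫⁻ y in openCube x b, F y ^ π) * V ^ (π / ρ - 1)) := by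
            gcongr
            have := holder_aux (μ := volume.restrict (openCube x b)) hF hρ hρπ
            rwa [Measure.restrict_apply_univ, volume_openCube x hb] at this
        _ = _ := by ring
    have hm : Measurable fun x : Rn n => ∫⁻ y in openCube x b, F y ^ π := by
      have hset : MeasurableSet {z : Rn n × Rn n | z.2 ∈ openCube z.1 b} := by
        have : {z : Rn n × Rn n | z.2 ∈ openCube z.1 b} =
            (fun z : Rn n × Rn n => z.2 - z.1) ⁻¹' openCube 0 b := by
          ext z; simp [openCube]
        rw [this]
        exact (measurableSet_openCube _ _).preimage (by fun_prop)
      have e : (fun x : Rn n => ∫⁻ y in openCube x b, F y ^ π) = fun x =>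
          ∫⁻ y, ({z : Rn n × Rn n | z.2 ∈ openCube z.1 b}).indicator
            (fun z => F z.2 ^ π) (x, y) := by
        ext x; rw [← lintegral_indicator (measurableSet_openCube _ _)]; rfl
      rw [e]
      exact (((hF.comp measurable_snd).pow_const π).indicator hset).lintegral_prod_right'
    have h2 : ∫⁻ x, H x ^ π ≤ (D * V) ^ (π / ρ) * ∫⁻ y, F y ^ π := by
      calc _ ≤ ∫⁻ x, D ^ (π / ρ) * V ^ (π / ρ - 1) * ∫⁻ y in openCube x b, F y ^ π :=
            lintegral_mono h1
        _ = D ^ (π / ρ) * V ^ (π / ρ - 1) * (V * ∫⁻ y, F y ^ π) := by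
            rw [lintegral_const_mul _ hm, lintegral_cube_swap (hF.pow_const π) hb]
        _ = D ^ (π / ρ) * (V ^ (π / ρ - 1) * V ^ (1 : ℝ)) * ∫⁻ y, F y ^ π := by
            rw [ENNReal.rpow_one]; ring
        _ = _ := by
            rw [← ENNReal.rpow_add _ _ hV0 hVt, sub_add_cancel,
              ENNReal.mul_rpow_of_nonneg _ _ (by positivity)]
    calc _ ≤ ((D * V) ^ (π / ρ) * ∫⁻ y, F y ^ π) ^ (1 / π) :=
          ENNReal.rpow_le_rpow h2 (by positivity)
      _ = _ := by
          rw [ENNReal.mul_rpow_of_nonneg _ _ (by positivity), ← ENNReal.rpow_mul]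
          congr 2
          field_simp

lemma core_fin {n : ℕ} (l : ℕ) {p r : ℝ≥0∞} (hr : r ≠ 0) (hr' : r ≠ ∞) (hrp : r ≤ p) {a : ℝ}
    (ha : 0 < a) {φ : Rn n → ℝ} (hφ : Measurable φ) {W : Rn n → ℝ≥0∞} (hWm : Measurable W)
    {K : ℝ≥0∞} (hW : ∀ x, ∀ y ∈ openCube x ((l + 1) * a), W x ≤ K * W y) :
    lpNormE p volume (fun x => W x * deltaE n l r (2 * a) (openCube x a) φ) ≤
      (((K * 2 ^ l) ^ r.toReal * (2 ^ n * (l + 1))) * (2 * (l + 1)) ^ n) ^ (1 / r.toReal) *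
        lpNormE p volume (fun x => W x * barDelta n l r a φ x) := by
  have hρ : 0 < r.toReal := ENNReal.toReal_pos hr hr'
  have ha0 : ENNReal.ofReal a ≠ 0 := by simpa using ha
  have hat : ENNReal.ofReal a ≠ ∞ := ENNReal.ofReal_ne_top
  have := avg_estimate (p := p) (n := n) hρ (by rwa [ENNReal.ofReal_toReal hr'])
    (hWm.mul (measurable_barDelta l hr hr' a hφ)) (b := (l + 1) * a) (by positivity)
    (H := fun x => W x * deltaE n l r (2 * a) (openCube x a) φ)
    (D := ((K * 2 ^ l) ^ r.toReal * (2 ^ n * (l + 1))) * ENNReal.ofReal a ^ (-(n : ℝ)))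
    (fun x => by
      refine (pointwise_fin l hr hr' ha hφ hWm x (hW x)).trans (le_of_eq ?_)
      rw [← mul_assoc]; rfl)
  refine this.trans (le_of_eq ?_)
  congr 2
  rw [mul_assoc]
  congr 1
  have e : ENNReal.ofReal (2 * ((l + 1) * a)) = 2 * (l + 1) * ENNReal.ofReal a := by
    rw [← mul_assoc, ENNReal.ofReal_mul (by positivity), ENNReal.ofReal_mul (by positivity),
      ENNReal.ofReal_add (by positivity) (by positivity)]
    simp
  rw [e, mul_pow, mul_comm, mul_assoc, ← ENNReal.rpow_natCast (ENNReal.ofReal a),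
    ← ENNReal.rpow_add _ _ ha0 hat]
  simp

lemma core_top {n : ℕ} (l : ℕ) {a : ℝ} {φ : Rn n → ℝ} (hφ : Measurable φ)
    {W : Rn n → ℝ≥0∞} (hWm : Measurable W)
    {K : ℝ≥0∞} (hW : ∀ x, ∀ y ∈ openCube x ((l + 1) * a), W x ≤ K * W y) :
    lpNormE ∞ volume (fun x => W x * deltaE n l ∞ (2 * a) (openCube x a) φ) ≤
      (K * 2 ^ l) * lpNormE ∞ volume (fun x => W x * barDelta n l ∞ a φ x) := by
  simp only [lpNormE, if_true]
  set M := essSup (fun x => W x * barDelta n l ∞ a φ x) volume with hM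
  have hdm := measurable_diffl l hφ
  have hgm : Measurable fun z : Rn n × Rn n => W z.2 * ‖diffl l z.1 φ z.2‖ₑ :=
    (hWm.comp measurable_snd).mul hdm.enorm
  set B : Set (Rn n × Rn n) := {z | M < W z.2 * ‖diffl l z.1 φ z.2‖ₑ} with hB
  have hBm : MeasurableSet B := measurableSet_lt measurable_const hgm
  have hfm : Measurable (B.indicator (fun _ => (1 : ℝ≥0∞))) := measurable_const.indicator hBm
  have hz : ∀ᵐ y, ∫⁻ h in openCube (0 : Rn n) a, B.indicator (fun _ => (1 : ℝ≥0∞)) (h, y) = 0 := by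
    filter_upwards [ENNReal.ae_le_essSup fun x => W x * barDelta n l ∞ a φ x] with y hy
    rw [← hM] at hy
    have hfy : Measurable fun h : Rn n => B.indicator (fun _ => (1 : ℝ≥0∞)) (h, y) :=
      hfm.comp (by fun_prop : Measurable fun h : Rn n => (h, y))
    rw [lintegral_eq_zero_iff hfy]
    have : ∀ᵐ h ∂(volume.restrict (openCube (0 : Rn n) a)), ‖diffl l h φ y‖ₑ ≤
        eLpNorm (fun h : Rn n => diffl l h φ y) ∞ (volume.restrict (openCube (0 : Rn n) a)) := by
      rw [eLpNorm_exponent_top]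
      exact ae_le_eLpNormEssSup
    filter_upwards [this] with h hh
    simp only [Pi.zero_apply]
    rw [Set.indicator_of_notMem]
    simp only [hB, Set.mem_ofPred_eq, not_lt]
    refine le_trans ?_ hy
    gcongr
    simpa [barDelta] using hh
  refine essSup_le_of_ae_le _ (Eventually.of_forall fun x => ?_)
  have hs := shift_int l _ hfm x (a := a)
  have hz' : ∫⁻ y in openCube x ((l + 1) * a), ∫⁻ h in openCube (0 : Rn n) a,
      B.indicator (fun _ => (1 : ℝ≥0∞)) (h, y) = 0 := by
    rw [lintegral_congr_ae (ae_restrict_of_ae hz)]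
    simp
  rw [hz', mul_zero, nonpos_iff_eq_zero] at hs
  have hS : Measurable fun z : Rn n × Rn n => ∑ j ∈ Finset.range (l + 1),
      B.indicator (fun _ => (1 : ℝ≥0∞))
        ((1 / 2 : ℝ) • z.1, z.2 + (j : ℝ) • ((1 / 2 : ℝ) • z.1)) := by
    refine Finset.measurable_sum _ fun j _ => hfm.comp ?_
    fun_prop
  have hs2 : ∫⁻ z, ∑ j ∈ Finset.range (l + 1), B.indicator (fun _ => (1 : ℝ≥0∞))
        ((1 / 2 : ℝ) • z.1, z.2 + (j : ℝ) • ((1 / 2 : ℝ) • z.1))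
      ∂((volume.restrict (openCube (0 : Rn n) (2 * a))).prod (volume.restrict (openCube x a)))
      = 0 := by
    rw [lintegral_prod _ hS.aemeasurable]; exact hs
  rw [lintegral_eq_zero_iff hS] at hs2
  have hmem : ∀ᵐ z ∂((volume.restrict (openCube (0 : Rn n) (2 * a))).prod
      (volume.restrict (openCube x a))), z ∈ openCube (0 : Rn n) (2 * a) ×ˢ openCube x a := by
    rw [Measure.prod_restrict]
    exact ae_restrict_mem ((measurableSet_openCube _ _).prod (measurableSet_openCube _ _))
  have hae : ∀ᵐ z ∂((volume.restrict (openCube (0 : Rn n) (2 * a))).prod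
      (volume.restrict (openCube x a))), W x * ‖diffl l z.1 φ z.2‖ₑ ≤ K * 2 ^ l * M := by
    filter_upwards [hs2, hmem] with z hz hmz
    obtain ⟨j, hj, hb⟩ := exists_bound l z.1 φ z.2
    have hmm := mem_cube_shift hj hmz.1 hmz.2
    have h0 : B.indicator (fun _ => (1 : ℝ≥0∞))
        ((1 / 2 : ℝ) • z.1, z.2 + (j : ℝ) • ((1 / 2 : ℝ) • z.1)) = 0 := by
      simp only [Pi.zero_apply, Finset.sum_eq_zero_iff] at hz
      exact hz j hj
    have h1 : ((1 / 2 : ℝ) • z.1, z.2 + (j : ℝ) • ((1 / 2 : ℝ) • z.1)) ∉ B := by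
      intro hc
      rw [Set.indicator_of_mem hc] at h0
      exact one_ne_zero h0
    simp only [hB, Set.mem_ofPred_eq, not_lt] at h1
    calc _ ≤ (K * W (z.2 + (j : ℝ) • ((1 / 2 : ℝ) • z.1))) * (2 ^ l *
          ‖diffl l ((1 / 2 : ℝ) • z.1) φ (z.2 + (j : ℝ) • ((1 / 2 : ℝ) • z.1))‖ₑ) :=
          mul_le_mul' (hW x _ hmm) hb
      _ = K * 2 ^ l * (W (z.2 + (j : ℝ) • ((1 / 2 : ℝ) • z.1)) *
          ‖diffl l ((1 / 2 : ℝ) • z.1) φ (z.2 + (j : ℝ) • ((1 / 2 : ℝ) • z.1))‖ₑ) := by ring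
      _ ≤ _ := by gcongr
  simp only [deltaE, ENNReal.toReal_top, _root_.div_zero, ENNReal.rpow_zero, one_mul,
    eLpNorm_exponent_top, eLpNormEssSup]
  rw [← ENNReal.essSup_const_mul]
  exact essSup_le_of_ae_le _ hae

/-- **Lemma 2.5: `B̄^l_{p,q,r}(ℝⁿ,{t_k}) ⊂ B̃^l_{p,q,r}(ℝⁿ,{t_k})` for
`{t_k} ∈ X̃^{α₃}_{α,σ,p}` and `r ≤ p`.** -/
theorem barB_subset_tildeB (n l : ℕ) (hn : 0 < n) (hl : 0 < l) (p q r : ℝ≥0∞)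
    (hp : 0 < p) (hq : 0 < q) (hr : 0 < r) (hrp : r ≤ p) (α₁ α₂ α₃ : ℝ) (hα₃ : 0 ≤ α₃)
    (σ₁ σ₂ : ℝ≥0∞) (hσ₁ : 0 < σ₁) (hσ₂ : 0 < σ₂)
    (t : ℕ → Rn n → ℝ) (ht : MemX n α₁ α₂ α₃ σ₁ σ₂ p t)
    (htbar : ∀ k x, ENNReal.ofReal (t k x) = tbarOf n p (tkm n p t) k x) :
    ∃ C : ℝ≥0∞, 0 < C ∧ C < ∞ ∧ ∀ φ : Rn n → ℝ, MemLrLoc n r φ →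
      tildeBnorm n l p q r t φ ≤ C * barBnorm n l p q r t φ ∧
        (MemBarB n l p q r t φ → MemTildeB n l p q r t φ) := by
  obtain ⟨hadm, -, -, hT⟩ := ht
  set K : ℝ≥0∞ := ((2 : ℝ≥0∞) ^ α₃) ^ (l + 1 + 1) with hK
  have h2t : (2 : ℝ≥0∞) ^ α₃ ≠ ∞ := ENNReal.rpow_ne_top_of_nonneg hα₃ (by simp)
  have hKt : K ≠ ∞ := ENNReal.pow_ne_top h2t
  set C0 : ℝ≥0∞ := if r = ∞ then K * 2 ^ l else
    (((K * 2 ^ l) ^ r.toReal * (2 ^ n * (l + 1))) * (2 * (l + 1)) ^ n) ^ (1 / r.toReal) with hC0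
  have hC0t : C0 ≠ ∞ := by
    have h1 : K * 2 ^ l ≠ ∞ := ENNReal.mul_ne_top hKt (ENNReal.pow_ne_top (by simp))
    have h2 : (l : ℝ≥0∞) + 1 ≠ ∞ := by simp
    rw [hC0]
    split_ifs with hr'
    · exact h1
    · refine ENNReal.rpow_ne_top_of_nonneg (by positivity) ?_
      refine ENNReal.mul_ne_top (ENNReal.mul_ne_top ?_ ?_) ?_
      · exact ENNReal.rpow_ne_top_of_nonneg (by positivity) h1
      · exact ENNReal.mul_ne_top (ENNReal.pow_ne_top (by simp)) h2
      · exact ENNReal.pow_ne_top (ENNReal.mul_ne_top (by simp) h2)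
  have hmain : ∀ φ : Rn n → ℝ, MemLrLoc n r φ →
      tildeBnorm n l p q r t φ ≤ (C0 + 1) * barBnorm n l p q r t φ := by
    intro φ hφ
    unfold tildeBnorm tildeBnormE barBnorm
    rw [mul_add]
    refine add_le_add ?_ ?_
    · refine (lqNorm_le hq (C := C0) fun k => ?_).trans (by gcongr; exact le_self_add)
      have hWm : Measurable fun x => ENNReal.ofReal (t (k + 1) x) :=
        (hadm (k + 1)).1.1.ennreal_ofReal
      have hs : (2 : ℝ) ^ (1 - ((k : ℤ) + 1)) = 2 * (2 : ℝ) ^ (-((k : ℤ) + 1)) := by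
        rw [sub_eq_add_neg, zpow_add₀ (by norm_num)]; simp
      have ha : (0 : ℝ) < (2 : ℝ) ^ (-((k : ℤ) + 1)) := by positivity
      have hW : ∀ x, ∀ y ∈ openCube x ((l + 1) * (2 : ℝ) ^ (-((k : ℤ) + 1))),
          ENNReal.ofReal (t (k + 1) x) ≤ K * ENNReal.ofReal (t (k + 1) y) := by
        intro x y hy
        rw [htbar, htbar]
        refine tbar_compare p (tkm n p t) (k + 1) (fun m m' h => (hT (k + 1) m m' h).2) (l + 1)
          x y fun i => ?_
        have := hy i
        push_cast
        exact this
      rw [hs]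
      by_cases hr' : r = ∞
      · have hp' : p = ∞ := by rw [hr'] at hrp; exact top_le_iff.1 hrp
        rw [hC0, if_pos hr']
        subst hr' hp'
        exact core_top l hφ.1 hWm hW
      · rw [hC0, if_neg hr']
        exact core_fin l hr.ne' hr' hrp ha hφ.1 hWm hW
    · exact le_mul_of_one_le_left zero_le le_add_self
  refine ⟨C0 + 1, by positivity, ENNReal.add_lt_top.2 ⟨hC0t.lt_top, by simp⟩, fun φ hφ =>
    ⟨hmain φ hφ, fun hb => ⟨hφ, (hmain φ hφ).trans_lt ?_⟩⟩⟩
  exact ENNReal.mul_lt_top (ENNReal.add_lt_top.2 ⟨hC0t.lt_top, by simp⟩) hb.2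

end
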